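/- arXiv:2211.03365 — 9 statements merged into one kernel-verified Lean document; each statement's English description precedes it below -/
import Mathlib

section
/- Let G be a finite simple graph, let σ, ρ ⊆ ℕ be finite sets, and let s : V(G) → ℚ be a function with s(v) ∈ {0,1} for every vertex v. Then the following are equivalent: (1) for every vertex v, (∏_{i ∈ ρ} ((i − Σ_{u ∈ N(v)} s(u))² + s(v))) · (1 − s(v)) + (∏_{j ∈ σ} ((j − Σ_{u ∈ N(v)} s(u))² + (s(v) − 1))) · s(v) = 0; (2) the set D = {v : s(v) = 1} is a [σ,ρ]-dominating set of G. -/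
/-- A set `D` is a `[σ,ρ]`-dominating set of `G` if every vertex in `D` has a number of
neighbors in `D` lying in `σ`, and every vertex outside `D` has a number of neighbors
in `D` lying in `ρ`. -/
def SigmaRhoDominating {V : Type*} [Fintype V] [DecidableEq V] (G : SimpleGraph V)
    [DecidableRel G.Adj] (σ ρ : Set ℕ) (D : Finset V) : Prop :=
  ∀ v : V, (v ∈ D → (G.neighborFinset v ∩ D).card ∈ σ) ∧
    (v ∉ D → (G.neighborFinset v ∩ D).card ∈ ρ)

theorem stmt0 {V : Type*} [Fintype V] [DecidableEq V] (G : SimpleGraph V) [DecidableRel G.Adj]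
    (σ ρ : Finset ℕ) (s : V → ℚ) (hs : ∀ v : V, s v = 0 ∨ s v = 1) :
    (∀ v : V,
      (∏ i ∈ ρ, (((i : ℚ) - ∑ u ∈ G.neighborFinset v, s u) ^ 2 + s v)) * (1 - s v)
        + (∏ j ∈ σ, (((j : ℚ) - ∑ u ∈ G.neighborFinset v, s u) ^ 2 + (s v - 1))) * s v = 0)
    ↔ SigmaRhoDominating G (↑σ) (↑ρ) (Finset.univ.filter (fun v => s v = 1)) := by
  have hsum : ∀ v : V, ∑ u ∈ G.neighborFinset v, s u
      = ((G.neighborFinset v ∩ Finset.univ.filter (fun v => s v = 1)).card : ℚ) := by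
    intro v
    have h1 : G.neighborFinset v ∩ Finset.univ.filter (fun v => s v = 1)
        = (G.neighborFinset v).filter (fun v => s v = 1) := by
      ext u; simp
    rw [h1, Finset.card_filter]
    push_cast
    refine Finset.sum_congr rfl fun u _ => ?_
    rcases hs u with h | h <;> simp [h]
  have hprod : ∀ (τ : Finset ℕ) (n : ℕ), (∏ i ∈ τ, ((i : ℚ) - (n : ℚ)) ^ 2) = 0 ↔ n ∈ τ := by
    intro τ n
    rw [Finset.prod_eq_zero_iff]
    constructor
    · rintro ⟨i, hi, h⟩
      have h2 : (i : ℚ) = n := sub_eq_zero.mp (pow_eq_zero_iff (two_ne_zero)|>.mp h)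
      have h3 : i = n := by exact_mod_cast h2
      exact h3 ▸ hi
    · intro h
      exact ⟨n, h, by simp⟩
  unfold SigmaRhoDominating
  refine forall_congr' fun v => ?_
  rw [hsum v]
  generalize hn : (G.neighborFinset v ∩ Finset.univ.filter (fun v => s v = 1)).card = n
  rcases hs v with h | h
  · simp only [h, Finset.mem_filter, Finset.mem_univ, true_and, add_zero, sub_zero, mul_one,
      mul_zero, hprod]
    simp
  · simp only [h, Finset.mem_filter, Finset.mem_univ, true_and, add_zero, sub_self, mul_one,
      mul_zero, zero_add, hprod]
    simp
end

section
/- Let G be a finite simple graph, let d ∈ ℕ, let S be a degree-d-modulator of G, and let σ, ρ ⊆ ℕ be sets satisfying the d-separation condition. Let D be a [σ,ρ]-dominating set of G and let v be a vertex with v ∉ S. If there exist i ∈ ρ and an integer j with 0 ≤ j ≤ d such that |N(v) ∩ S ∩ D| = i − j, then v ∉ D. Similarly, if there exist i ∈ σ and an integer j with 0 ≤ j ≤ d such that |N(v) ∩ S ∩ D| = i − j, then v ∈ D. -/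
/-- `S` is a degree-`d`-modulator of `G` if every vertex not in `S` has at most `d`
neighbors not in `S`. -/
def DegreeModulator {V : Type*} [Fintype V] [DecidableEq V] (G : SimpleGraph V)
    [DecidableRel G.Adj] (d : ℕ) (S : Finset V) : Prop :=
  ∀ v : V, v ∉ S → (G.neighborFinset v \ S).card ≤ d

/-- The `d`-separation condition for `σ, ρ ⊆ ℕ`. -/
def DSeparation (d : ℕ) (σ ρ : Set ℕ) : Prop :=
  (∀ i ∈ σ, ∀ j : ℕ, j ≤ d → ∀ r ∈ ρ, (i : ℤ) - (j : ℤ) ≠ (r : ℤ)) ∧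
  (∀ i ∈ ρ, ∀ j : ℕ, j ≤ d → ∀ r ∈ σ, (i : ℤ) - (j : ℤ) ≠ (r : ℤ))

theorem stmt2 {V : Type*} [Fintype V] [DecidableEq V] (G : SimpleGraph V) [DecidableRel G.Adj]
    (d : ℕ) (S : Finset V) (hS : DegreeModulator G d S)
    (σ ρ : Set ℕ) (hsep : DSeparation d σ ρ)
    (D : Finset V) (hD : SigmaRhoDominating G σ ρ D)
    (v : V) (hv : v ∉ S) :
    ((∃ i ∈ ρ, ∃ j : ℕ, j ≤ d ∧
        ((G.neighborFinset v ∩ S ∩ D).card : ℤ) = (i : ℤ) - (j : ℤ)) → v ∉ D) ∧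
    ((∃ i ∈ σ, ∃ j : ℕ, j ≤ d ∧
        ((G.neighborFinset v ∩ S ∩ D).card : ℤ) = (i : ℤ) - (j : ℤ)) → v ∈ D) := by
  have h1 : (G.neighborFinset v ∩ S ∩ D).card ≤ (G.neighborFinset v ∩ D).card := by
    apply Finset.card_le_card
    intro x hx
    simp only [Finset.mem_inter] at hx ⊢
    exact ⟨hx.1.1, hx.2⟩
  have h2 : (G.neighborFinset v ∩ D).card ≤ (G.neighborFinset v ∩ S ∩ D).card + d := by
    have h3 : G.neighborFinset v ∩ D ⊆
        (G.neighborFinset v ∩ S ∩ D) ∪ (G.neighborFinset v \ S) := by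
      intro x hx
      simp only [Finset.mem_inter, Finset.mem_union, Finset.mem_sdiff] at hx ⊢
      tauto
    have h4 := Finset.card_le_card h3
    have h5 := Finset.card_union_le (G.neighborFinset v ∩ S ∩ D) (G.neighborFinset v \ S)
    have h6 := hS v hv
    omega
  generalize (G.neighborFinset v ∩ S ∩ D).card = c at h1 h2 ⊢
  have hDv := hD v
  generalize (G.neighborFinset v ∩ D).card = n at h1 h2 hDv
  -- two elements of σ and ρ cannot be within distance d of each other
  have key : ∀ a ∈ σ, ∀ b ∈ ρ, a ≤ b + d → b ≤ a + d → False := by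
    intro a ha b hb hab hba
    rcases le_total a b with h | h
    · exact hsep.2 b hb (b - a) (by omega) a ha (by omega)
    · exact hsep.1 a ha (a - b) (by omega) b hb (by omega)
  constructor
  · rintro ⟨i, hi, j, hj, h⟩ hvD
    exact key n (hDv.1 hvD) i hi (by omega) (by omega)
  · rintro ⟨i, hi, j, hj, h⟩
    by_contra hvD
    exact key i hi n (hDv.2 hvD) (by omega) (by omega)
end

section
/- Let G be a finite simple graph, let d ∈ ℕ, let S be a degree-d-modulator of G, and let σ, ρ ⊆ ℕ be sets satisfying the d-separation condition. If D₁ and D₂ are [σ,ρ]-dominating sets of G with D₁ ∩ S = D₂ ∩ S, then D₁ = D₂. -/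
theorem stmt3 {V : Type*} [Fintype V] [DecidableEq V] (G : SimpleGraph V) [DecidableRel G.Adj]
    (d : ℕ) (S : Finset V) (hS : DegreeModulator G d S)
    (σ ρ : Set ℕ) (hsep : DSeparation d σ ρ)
    (D₁ D₂ : Finset V) (hD₁ : SigmaRhoDominating G σ ρ D₁)
    (hD₂ : SigmaRhoDominating G σ ρ D₂)
    (hSS : D₁ ∩ S = D₂ ∩ S) : D₁ = D₂ := by
  have key : ∀ D : Finset V, ∀ v ∉ S,
      (G.neighborFinset v ∩ (D ∩ S)).card ≤ (G.neighborFinset v ∩ D).card ∧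
      (G.neighborFinset v ∩ D).card ≤ (G.neighborFinset v ∩ (D ∩ S)).card + d := by
    intro D v hv
    constructor
    · apply Finset.card_le_card
      intro x hx
      simp only [Finset.mem_inter] at hx ⊢
      exact ⟨hx.1, hx.2.1⟩
    · have h1 : G.neighborFinset v ∩ D ⊆
          (G.neighborFinset v ∩ (D ∩ S)) ∪ (G.neighborFinset v \ S) := by
        intro x hx
        simp only [Finset.mem_inter, Finset.mem_union, Finset.mem_sdiff] at hx ⊢
        tauto
      have h2 := Finset.card_le_card h1
      have h3 := Finset.card_union_le (G.neighborFinset v ∩ (D ∩ S)) (G.neighborFinset v \ S)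
      have h4 := hS v hv
      omega
  have sep : ∀ a ∈ σ, ∀ b ∈ ρ, a ≤ b + d → b ≤ a + d → False := by
    intro a ha b hb h1 h2
    rcases le_total a b with h | h
    · exact hsep.2 b hb (b - a) (by omega) a ha (by omega)
    · exact hsep.1 a ha (a - b) (by omega) b hb (by omega)
  ext v
  by_cases hv : v ∈ S
  · have := Finset.ext_iff.mp hSS v
    simpa [hv] using this
  · have k1 := key D₁ v hv
    have k2 := key D₂ v hv
    rw [hSS] at k1
    constructor
    · intro h
      by_contra h'
      exact sep _ ((hD₁ v).1 h) _ ((hD₂ v).2 h') (by omega) (by omega)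
    · intro h
      by_contra h'
      exact sep _ ((hD₂ v).1 h) _ ((hD₁ v).2 h') (by omega) (by omega)
end

section
/- Let G be a finite simple graph, let ρ ⊆ ℕ be a finite nonempty set, and let K ∈ ℕ. Let D be a [σ,ρ]-dominating set of G with |D| ≤ K. Suppose T is a set of vertices with |T| ≥ K + 1 such that every vertex t ∈ T has open neighborhood N(t) exactly equal to a fixed vertex set C, where |C| = min(ρ). Then C ⊆ D. -/
theorem stmt5 {V : Type*} [Fintype V] [DecidableEq V] (G : SimpleGraph V) [DecidableRel G.Adj]
    (σ : Set ℕ) (ρ : Finset ℕ) (hρ : ρ.Nonempty) (K : ℕ)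
    (D : Finset V) (hD : SigmaRhoDominating G σ (↑ρ) D) (hDK : D.card ≤ K)
    (T C : Finset V) (hT : K + 1 ≤ T.card)
    (hTC : ∀ t ∈ T, G.neighborFinset t = C)
    (hC : C.card = ρ.min' hρ) :
    C ⊆ D := by
  obtain ⟨t, htT, htD⟩ := Finset.exists_mem_notMem_of_card_lt_card (show D.card < T.card by omega)
  have h := (hD t).2 htD
  rw [hTC t htT] at h
  have h2 : ρ.min' hρ ≤ (C ∩ D).card := Finset.min'_le _ _ (Finset.mem_coe.1 h)
  have h3 : C ∩ D = C := Finset.eq_of_subset_of_card_le Finset.inter_subset_left (by omega)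
  exact Finset.inter_eq_left.1 h3
end

section
/- Let G be a finite simple graph and let 𝒫 be a partition of the vertex set of G such that every two distinct vertices lying in the same part of 𝒫 have the same type. Let σ, ρ ⊆ ℕ, and let D and D′ be sets of vertices such that |D ∩ W| = |D′ ∩ W| for every part W ∈ 𝒫. Then D is a [σ,ρ]-dominating set of G if and only if D′ is a [σ,ρ]-dominating set of G. -/
lemma aux_dir {V : Type*} [Fintype V] [DecidableEq V] (G : SimpleGraph V) [DecidableRel G.Adj]
    (P : Finpartition (Finset.univ : Finset V))
    (htype : ∀ W ∈ P.parts, ∀ u ∈ W, ∀ v ∈ W, u ≠ v →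
      (G.neighborFinset u).erase v = (G.neighborFinset v).erase u)
    (σ ρ : Set ℕ) (D D' : Finset V)
    (hcard : ∀ W ∈ P.parts, (D ∩ W).card = (D' ∩ W).card)
    (h : SigmaRhoDominating G σ ρ D') : SigmaRhoDominating G σ ρ D := by
  have key : ∀ u u' w, P.part u = P.part u' → w ≠ u → w ≠ u' → G.Adj u w → G.Adj u' w := by
    intro u u' w hp h1 h2 ha
    by_cases huu : u = u'
    · exact huu ▸ ha
    have := htype (P.part u) (P.part_mem.2 (Finset.mem_univ u)) u
      (P.mem_part (Finset.mem_univ u)) u' (hp ▸ P.mem_part (Finset.mem_univ u')) huu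
    have h3 : w ∈ (G.neighborFinset u).erase u' := by simp [h2, ha]
    rw [this] at h3
    simpa [h1] using h3
  have key2 : ∀ u v u' v', P.part u = P.part u' → P.part v = P.part v' → u' ≠ v' →
      G.Adj u v → G.Adj u' v' := by
    intro u v u' v' hu hv hne ha
    have huv : u ≠ v := ha.ne
    by_cases h1 : u' = v
    · subst h1
      by_cases h2 : v' = u
      · subst h2; exact ha.symm
      · exact (key u v' u' (hu.trans hv) huv.symm hne ha).symm
    · have h3 := key u u' v hu huv.symm (Ne.symm h1) ha
      exact (key v v' u' hv h1 hne h3.symm).symm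
  let f : Finset V → V → Finset V × Prop := fun D v => (P.part v, v ∈ D)
  have fib : ∀ c, Nonempty ({a // f D a = c} ≃ {a // f D' a = c}) := by
    classical
    rintro ⟨W, b⟩
    apply Fintype.card_eq.1
    rw [Fintype.card_subtype, Fintype.card_subtype]
    by_cases hW : W ∈ P.parts
    · have hpart : ∀ v, P.part v = W ↔ v ∈ W := fun v =>
        ⟨fun h => h ▸ P.mem_part (Finset.mem_univ v), fun h => P.part_eq_of_mem hW h⟩
      have hc := hcard W hW
      by_cases hb : b
      · have e : ∀ D : Finset V, ({x | f D x = (W, b)} : Finset V) = D ∩ W := by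
          intro D; ext x; simp [f, hpart, hb, and_comm]
        rw [e, e, hc]
      · have e : ∀ D : Finset V, ({x | f D x = (W, b)} : Finset V) = W \ D := by
          intro D; ext x; simp [f, hpart, hb]
        rw [e, e, Finset.card_sdiff, Finset.card_sdiff, hc]
    · have e : ∀ D : Finset V, ({x | f D x = (W, b)} : Finset V) = ∅ := by
        intro D; ext x
        simp only [f, Finset.mem_filter, Prod.mk.injEq, Finset.notMem_empty, iff_false]
        rintro ⟨-, h, -⟩
        exact hW (h ▸ P.part_mem.2 (Finset.mem_univ x))
      rw [e, e]
  let e : V ≃ V := Equiv.ofFiberEquiv (fun c => (fib c).some)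
  have he : ∀ v, f D' (e v) = f D v := fun v => Equiv.ofFiberEquiv_map _ v
  have hp : ∀ v, P.part (e v) = P.part v := fun v => congrArg Prod.fst (he v)
  have hD : ∀ v, e v ∈ D' ↔ v ∈ D := fun v => iff_of_eq (congrArg Prod.snd (he v))
  have hadj : ∀ u v, G.Adj (e u) (e v) ↔ G.Adj u v := fun u v =>
    ⟨fun h => key2 _ _ _ _ (hp u) (hp v) (fun h' => h.ne (congrArg e h')) h,
     fun h => key2 _ _ _ _ (hp u).symm (hp v).symm (fun h' => h.ne (e.injective h')) h⟩
  intro v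
  have hc : (G.neighborFinset v ∩ D).card = (G.neighborFinset (e v) ∩ D').card := by
    apply Finset.card_equiv e
    intro i
    simp [hadj, hD]
  have := h (e v)
  rwa [hD, ← hc] at this

theorem stmt11 {V : Type*} [Fintype V] [DecidableEq V] (G : SimpleGraph V) [DecidableRel G.Adj]
    (P : Finpartition (Finset.univ : Finset V))
    (htype : ∀ W ∈ P.parts, ∀ u ∈ W, ∀ v ∈ W, u ≠ v →
      (G.neighborFinset u).erase v = (G.neighborFinset v).erase u)
    (σ ρ : Set ℕ) (D D' : Finset V)
    (hcard : ∀ W ∈ P.parts, (D ∩ W).card = (D' ∩ W).card) :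
    SigmaRhoDominating G σ ρ D ↔ SigmaRhoDominating G σ ρ D' := by
  exact ⟨aux_dir G P htype σ ρ D' D (fun W hW => (hcard W hW).symm),
    aux_dir G P htype σ ρ D D' hcard⟩
end

section
/- Let G be a finite simple graph, let s, r ∈ ℕ, and let σ, ρ ⊆ ℕ with σ ⊆ {0, 1, …, s} and ρ ⊆ {1, …, r}. Let D be a [σ,ρ]-dominating set of G. Let W be an independent set of vertices such that every two distinct vertices of W have the same type, and suppose some vertex of W has at least one neighbor in G. Then |W ∩ D| ≤ max(s, r). -/
theorem stmt12 {V : Type*} [Fintype V] [DecidableEq V] (G : SimpleGraph V) [DecidableRel G.Adj]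
    (s r : ℕ) (σ ρ : Set ℕ)
    (hσ : ∀ i ∈ σ, i ≤ s) (hρ : ∀ i ∈ ρ, 1 ≤ i ∧ i ≤ r)
    (D : Finset V) (hD : SigmaRhoDominating G σ ρ D)
    (W : Finset V)
    (hWind : ∀ u ∈ W, ∀ v ∈ W, ¬ G.Adj u v)
    (hWtype : ∀ u ∈ W, ∀ v ∈ W, u ≠ v →
      (G.neighborFinset u).erase v = (G.neighborFinset v).erase u)
    (hWnbr : ∃ w ∈ W, ∃ x : V, G.Adj w x) :
    (W ∩ D).card ≤ max s r := by
  obtain ⟨w, hw, x, hx⟩ := hWnbr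
  have hsub : W ∩ D ⊆ G.neighborFinset x ∩ D := by
    intro u hu
    rw [Finset.mem_inter] at hu ⊢
    refine ⟨?_, hu.2⟩
    rw [SimpleGraph.mem_neighborFinset]
    by_cases h : u = w
    · rw [h]; exact hx.symm
    · have hxu : x ≠ u := by
        rintro rfl
        exact hWind w hw x hu.1 hx
      have h1 : x ∈ (G.neighborFinset w).erase u :=
        Finset.mem_erase.2 ⟨hxu, (G.mem_neighborFinset w x).2 hx⟩
      rw [← hWtype u hu.1 w hw h] at h1
      exact ((G.mem_neighborFinset u x).1 (Finset.mem_of_mem_erase h1)).symm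
  refine (Finset.card_le_card hsub).trans ?_
  by_cases hxD : x ∈ D
  · exact (hσ _ ((hD x).1 hxD)).trans (le_max_left _ _)
  · exact (hρ _ ((hD x).2 hxD)).2.trans (le_max_right _ _)
end

section
/- Let G be a finite simple graph, let s ∈ ℕ, and let σ, ρ ⊆ ℕ with σ ⊆ {0, 1, …, s}. Let D be a [σ,ρ]-dominating set of G and let W be a clique of G. Then |W ∩ D| ≤ s + 1. -/
theorem stmt13 {V : Type*} [Fintype V] [DecidableEq V] (G : SimpleGraph V) [DecidableRel G.Adj]
    (s : ℕ) (σ ρ : Set ℕ) (hσ : ∀ i ∈ σ, i ≤ s)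
    (D : Finset V) (hD : SigmaRhoDominating G σ ρ D)
    (W : Finset V) (hW : ∀ u ∈ W, ∀ v ∈ W, u ≠ v → G.Adj u v) :
    (W ∩ D).card ≤ s + 1 := by
  rcases (W ∩ D).eq_empty_or_nonempty with h | ⟨v, hv⟩
  · simp [h]
  · have hv2 := Finset.mem_inter.mp hv
    have h1 := hσ _ ((hD v).1 hv2.2)
    have h2 : (W ∩ D).erase v ⊆ G.neighborFinset v ∩ D := by
      intro u hu
      rw [Finset.mem_erase, Finset.mem_inter] at hu
      rw [Finset.mem_inter, SimpleGraph.mem_neighborFinset]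
      exact ⟨hW v hv2.1 u hu.2.1 (Ne.symm hu.1), hu.2.2⟩
    have h3 := Finset.card_le_card h2
    rw [Finset.card_erase_of_mem hv] at h3
    omega
end

section
/- Let G be a finite simple graph, let r ∈ ℕ, and let ρ ⊆ {1, …, r}. Let D be a [ℕ,ρ]-dominating set of G that is minimal, i.e., no proper subset of D is a [ℕ,ρ]-dominating set of G. Let W be an independent set of vertices such that every two distinct vertices of W have the same type. Then either |W ∩ D| ≤ r or W ⊆ D. -/
theorem stmt15 {V : Type*} [Fintype V] [DecidableEq V] (G : SimpleGraph V) [DecidableRel G.Adj]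
    (r : ℕ) (ρ : Set ℕ) (hρ : ∀ i ∈ ρ, 1 ≤ i ∧ i ≤ r)
    (D : Finset V)
    (hD : ∀ v : V, v ∉ D → (G.neighborFinset v ∩ D).card ∈ ρ)
    (hmin : ∀ D' : Finset V, D' ⊂ D →
      ¬ (∀ v : V, v ∉ D' → (G.neighborFinset v ∩ D').card ∈ ρ))
    (W : Finset V)
    (hWind : ∀ u ∈ W, ∀ v ∈ W, ¬ G.Adj u v)
    (hWtype : ∀ u ∈ W, ∀ v ∈ W, u ≠ v →
      (G.neighborFinset u).erase v = (G.neighborFinset v).erase u) :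
    (W ∩ D).card ≤ r ∨ W ⊆ D := by
  by_contra hcon
  push Not at hcon
  obtain ⟨hr, hW⟩ := hcon
  obtain ⟨w, hwW, hwD⟩ := Finset.not_subset.mp hW
  have hN : ∀ u ∈ W, ∀ v ∈ W, G.neighborFinset u = G.neighborFinset v := by
    intro u hu v hv
    by_cases h : u = v
    · rw [h]
    · have h1 := hWtype u hu v hv h
      rwa [Finset.erase_eq_of_notMem (by simpa using hWind u hu v hv),
        Finset.erase_eq_of_notMem (by simpa using hWind v hv u hu)] at h1
  have hne : (W ∩ D).Nonempty := by
    rw [← Finset.card_pos]; omega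
  obtain ⟨u, hu⟩ := hne
  obtain ⟨huW, huD⟩ := Finset.mem_inter.mp hu
  have key : ∀ v, v ∉ D → ¬ G.Adj v u := by
    intro v hv hadj
    have h1 := (hρ _ (hD v hv)).2
    have h2 : W ∩ D ⊆ G.neighborFinset v ∩ D := by
      intro x hx
      obtain ⟨hxW, hxD⟩ := Finset.mem_inter.mp hx
      refine Finset.mem_inter.mpr ⟨?_, hxD⟩
      have h3 : v ∈ G.neighborFinset x := by
        rw [hN x hxW u huW]
        simpa using hadj.symm
      simpa using ((G.mem_neighborFinset x v).mp h3).symm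
    have h4 := Finset.card_le_card h2
    omega
  have hers : ∀ v, ¬ G.Adj v u → G.neighborFinset v ∩ D.erase u = G.neighborFinset v ∩ D := by
    intro v hv
    rw [Finset.inter_erase, Finset.erase_eq_of_notMem]
    simp [hv]
  refine hmin (D.erase u) (Finset.erase_ssubset huD) ?_
  intro v hv
  by_cases hvu : v = u
  · subst hvu
    rw [hers v (G.loopless.irrefl v), hN v huW w hwW]
    exact hD w hwD
  · have hvD : v ∉ D := fun h => hv (Finset.mem_erase.mpr ⟨hvu, h⟩)
    rw [hers v (key v hvD)]
    exact hD v hvD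
end

section
/- Let G be a finite simple graph, let s ∈ ℕ, and let σ ⊆ {0, 1, …, s}. Let D be a set of vertices such that |N(v) ∩ D| ∈ σ for every v ∈ D and |N(v) ∩ D| ≥ 1 for every v ∉ D (i.e., D is a [σ,ℕ*]-dominating set, where ℕ* = ℕ \ {0}). Let W be an independent set of vertices such that every two distinct vertices of W have the same type. Then either |W ∩ D| ≤ s + 1 or W ⊆ D. -/
theorem stmt16 {V : Type*} [Fintype V] [DecidableEq V] (G : SimpleGraph V) [DecidableRel G.Adj]
    (s : ℕ) (σ : Set ℕ) (hσ : ∀ i ∈ σ, i ≤ s)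
    (D : Finset V)
    (hD : ∀ v : V, (v ∈ D → (G.neighborFinset v ∩ D).card ∈ σ) ∧
      (v ∉ D → 1 ≤ (G.neighborFinset v ∩ D).card))
    (W : Finset V)
    (hWind : ∀ u ∈ W, ∀ v ∈ W, ¬ G.Adj u v)
    (hWtype : ∀ u ∈ W, ∀ v ∈ W, u ≠ v →
      (G.neighborFinset u).erase v = (G.neighborFinset v).erase u) :
    (W ∩ D).card ≤ s + 1 ∨ W ⊆ D := by
  by_cases hsub : W ⊆ D
  · exact Or.inr hsub
  left
  obtain ⟨w, hwW, hwD⟩ := Finset.not_subset.mp hsub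
  obtain ⟨x, hx⟩ := Finset.card_pos.mp ((hD w).2 hwD)
  rw [Finset.mem_inter, SimpleGraph.mem_neighborFinset] at hx
  obtain ⟨hwx, hxD⟩ := hx
  have hss : W ∩ D ⊆ G.neighborFinset x ∩ D := by
    intro u hu
    rw [Finset.mem_inter] at hu
    rw [Finset.mem_inter, SimpleGraph.mem_neighborFinset]
    refine ⟨?_, hu.2⟩
    have hne : w ≠ u := fun h => hwD (h ▸ hu.2)
    have hxu : x ≠ u := fun h => hWind w hwW u hu.1 (h ▸ hwx)
    have hmem : x ∈ (G.neighborFinset w).erase u :=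
      Finset.mem_erase.mpr ⟨hxu, (G.mem_neighborFinset w x).mpr hwx⟩
    rw [hWtype w hwW u hu.1 hne] at hmem
    exact ((G.mem_neighborFinset u x).mp (Finset.mem_of_mem_erase hmem)).symm
  have h1 := Finset.card_le_card hss
  have h2 := hσ _ ((hD x).1 hxD)
  omega
end
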